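/- Let $S$, $U$, $X$, $Y$, $\hat{S}$ be random variables on a common probability space, each taking values in a finite set, whose joint distribution factorizes as $P_S P_U P_{X|S,U} P_{Y|X} P_{\hat{S}|Y,U}$; equivalently: (i) $U$ is independent of $S$; (ii) $Y$ is conditionally independent of $(S,U)$ given $X$; (iii) $\hat{S}$ is conditionally independent of $(S,X)$ given $(Y,U)$. Then $I(S;\hat{S}) \le I(X;Y)$. -/

import Mathlib

open MeasureTheory

/-- `pr μ E` is the probability of the event `E` as a real number. -/
noncomputable def pr {Ω : Type*} [MeasurableSpace Ω] (μ : Measure Ω) (E : Set Ω) : ℝ :=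
  (μ E).toReal

/-- Mutual information `I(X;Y)` of two finitely-valued random variables,
with the convention `0 log 0 = 0` (note `Real.log 0 = 0` in Mathlib). -/
noncomputable def mutInfo {Ω α β : Type*} [MeasurableSpace Ω] [Fintype α] [Fintype β]
    (μ : Measure Ω) (X : Ω → α) (Y : Ω → β) : ℝ :=
  ∑ x : α, ∑ y : β,
    pr μ {ω | X ω = x ∧ Y ω = y} *
      Real.log (pr μ {ω | X ω = x ∧ Y ω = y} /
        (pr μ {ω | X ω = x} * pr μ {ω | Y ω = y}))

/-- `X` and `Y` are independent: the joint pmf factorizes. -/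
def IndepRV {Ω α β : Type*} [MeasurableSpace Ω] (μ : Measure Ω)
    (X : Ω → α) (Y : Ω → β) : Prop :=
  ∀ x y, pr μ {ω | X ω = x ∧ Y ω = y} = pr μ {ω | X ω = x} * pr μ {ω | Y ω = y}

/-- `A` and `B` are conditionally independent given `C`:
`P(A = a, B = b ∣ C = c) = P(A = a ∣ C = c) * P(B = b ∣ C = c)` whenever `P(C = c) > 0`. -/
def CondIndepRV {Ω α β γ : Type*} [MeasurableSpace Ω] (μ : Measure Ω)
    (A : Ω → α) (B : Ω → β) (C : Ω → γ) : Prop :=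
  ∀ a b c, 0 < pr μ {ω | C ω = c} →
    pr μ {ω | A ω = a ∧ B ω = b ∧ C ω = c} / pr μ {ω | C ω = c} =
      (pr μ {ω | A ω = a ∧ C ω = c} / pr μ {ω | C ω = c}) *
      (pr μ {ω | B ω = b ∧ C ω = c} / pr μ {ω | C ω = c})


lemma pr_nonneg' {Ω : Type*} [MeasurableSpace Ω] (μ : Measure Ω) (E : Set Ω) : 0 ≤ pr μ E :=
  ENNReal.toReal_nonneg

lemma pr_mono' {Ω : Type*} [MeasurableSpace Ω] (μ : Measure Ω) [IsProbabilityMeasure μ]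
    {E F : Set Ω} (h : E ⊆ F) : pr μ E ≤ pr μ F :=
  ENNReal.toReal_mono (measure_ne_top _ _) (measure_mono h)

lemma pr_marg {Ω α : Type*} [MeasurableSpace Ω] [Fintype α] [MeasurableSpace α]
    [MeasurableSingletonClass α] (μ : Measure Ω) [IsProbabilityMeasure μ]
    {V : Ω → α} (hV : Measurable V) (E : Set Ω) :
    ∑ a, pr μ {ω | V ω = a ∧ ω ∈ E} = pr μ E := by
  have h := sum_measureReal_preimage_singleton (μ := μ.restrict E) (f := V) Finset.univ
    (fun y _ => hV (measurableSet_singleton y))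
  have h2 : (μ.restrict E).real (V ⁻¹' (Finset.univ : Finset α)) = pr μ E := by
    simp [pr, Measure.real]
  rw [← h2, ← h]
  refine Finset.sum_congr rfl fun a _ => ?_
  rw [Measure.real, Measure.restrict_apply (hV (measurableSet_singleton a))]
  rfl

lemma sum_pr_comp {Ω α β : Type*} [MeasurableSpace Ω] [Fintype α] [MeasurableSpace α]
    [MeasurableSingletonClass α] [Fintype β] (μ : Measure Ω) [IsProbabilityMeasure μ]
    {V : Ω → α} (hV : Measurable V) (g : α → β) (f : β → ℝ) :
    ∑ b, pr μ {ω | g (V ω) = b} * f b = ∑ a, pr μ {ω | V ω = a} * f (g a) := by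
  classical
  have h1 : ∀ b, pr μ {ω | g (V ω) = b} * f b =
      ∑ a, if g a = b then pr μ {ω | V ω = a} * f b else 0 := by
    intro b
    rw [← pr_marg μ hV, Finset.sum_mul]
    refine Finset.sum_congr rfl fun a _ => ?_
    split_ifs with h
    · congr 2
      ext ω
      simp only [Set.mem_ofPred_eq]
      constructor
      · exact fun h => h.1
      · rintro rfl
        exact ⟨rfl, h⟩
    · have : {ω | V ω = a ∧ ω ∈ {ω | g (V ω) = b}} = ∅ := by
        ext ω
        simp only [Set.mem_ofPred_eq, Set.mem_empty_iff_false, iff_false]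
        rintro ⟨rfl, h'⟩
        exact h h'
      rw [this]
      simp [pr]
  rw [Finset.sum_congr rfl fun b _ => h1 b, Finset.sum_comm]
  refine Finset.sum_congr rfl fun a _ => ?_
  simp

lemma condIndep_mul {Ω α β γ : Type*} [MeasurableSpace Ω] (μ : Measure Ω) [IsProbabilityMeasure μ]
    {A : Ω → α} {B : Ω → β} {C : Ω → γ} (h : CondIndepRV μ A B C) (a : α) (b : β) (c : γ)
    (hc : 0 < pr μ {ω | C ω = c}) :
    pr μ {ω | A ω = a ∧ B ω = b ∧ C ω = c} * pr μ {ω | C ω = c} =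
      pr μ {ω | A ω = a ∧ C ω = c} * pr μ {ω | B ω = b ∧ C ω = c} := by
  have := h a b c hc
  field_simp at this
  linarith

/-- If the joint distribution of `(S, U, X, Y, Ŝ)` factorizes as
`P_S P_U P_{X|S,U} P_{Y|X} P_{Ŝ|Y,U}`, then `I(S;Ŝ) ≤ I(X;Y)`. -/
theorem stmt0 {Ω 𝒮 𝒰 𝒳 𝒴 𝒮h : Type*} [MeasurableSpace Ω]
    [Fintype 𝒮] [MeasurableSpace 𝒮] [MeasurableSingletonClass 𝒮]
    [Fintype 𝒰] [MeasurableSpace 𝒰] [MeasurableSingletonClass 𝒰]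
    [Fintype 𝒳] [MeasurableSpace 𝒳] [MeasurableSingletonClass 𝒳]
    [Fintype 𝒴] [MeasurableSpace 𝒴] [MeasurableSingletonClass 𝒴]
    [Fintype 𝒮h] [MeasurableSpace 𝒮h] [MeasurableSingletonClass 𝒮h]
    (μ : Measure Ω) [IsProbabilityMeasure μ]
    (S : Ω → 𝒮) (U : Ω → 𝒰) (X : Ω → 𝒳) (Y : Ω → 𝒴) (Sh : Ω → 𝒮h)
    (hS : Measurable S) (hU : Measurable U) (hX : Measurable X)
    (hY : Measurable Y) (hSh : Measurable Sh)
    (hUindep : IndepRV μ U S)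
    (hYcond : CondIndepRV μ Y (fun ω => (S ω, U ω)) X)
    (hShcond : CondIndepRV μ Sh (fun ω => (S ω, X ω)) (fun ω => (Y ω, U ω))) :
    mutInfo μ S Sh ≤ mutInfo μ X Y := by
  classical
  set W : Ω → 𝒴 × 𝒰 × 𝒮h × 𝒮 × 𝒳 := fun ω => (Y ω, U ω, Sh ω, S ω, X ω) with hWdef
  have hW : Measurable W := hY.prodMk (hU.prodMk (hSh.prodMk (hS.prodMk hX)))
  -- the auxiliary sub-probability mass function
  let q : 𝒴 × 𝒰 × 𝒮h × 𝒮 × 𝒳 → ℝ := fun w =>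
    pr μ {ω | Y ω = w.1} *
    (pr μ {ω | Sh ω = w.2.2.1 ∧ Y ω = w.1 ∧ U ω = w.2.1} / pr μ {ω | Y ω = w.1 ∧ U ω = w.2.1}) *
    (pr μ {ω | S ω = w.2.2.2.1 ∧ Sh ω = w.2.2.1} / pr μ {ω | Sh ω = w.2.2.1}) *
    (pr μ {ω | X ω = w.2.2.2.2 ∧ S ω = w.2.2.2.1 ∧ U ω = w.2.1} / pr μ {ω | S ω = w.2.2.2.1})
  have hnn := pr_nonneg' μ
  have hq0 : ∀ w, 0 ≤ q w := fun w =>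
    mul_nonneg (mul_nonneg (mul_nonneg (hnn _) (div_nonneg (hnn _) (hnn _)))
      (div_nonneg (hnn _) (hnn _))) (div_nonneg (hnn _) (hnn _))
  have e1 : mutInfo μ S Sh = ∑ w, pr μ {ω | W ω = w} *
      Real.log (pr μ {ω | S ω = w.2.2.2.1 ∧ Sh ω = w.2.2.1} /
        (pr μ {ω | S ω = w.2.2.2.1} * pr μ {ω | Sh ω = w.2.2.1})) := by
    have := sum_pr_comp μ hW (fun w => (w.2.2.2.1, w.2.2.1))
      (fun b : 𝒮 × 𝒮h => Real.log (pr μ {ω | S ω = b.1 ∧ Sh ω = b.2} /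
        (pr μ {ω | S ω = b.1} * pr μ {ω | Sh ω = b.2})))
    rw [← this, Fintype.sum_prod_type]
    simp only [mutInfo, hWdef, Prod.mk.injEq]
  have e2 : mutInfo μ X Y = ∑ w, pr μ {ω | W ω = w} *
      Real.log (pr μ {ω | X ω = w.2.2.2.2 ∧ Y ω = w.1} /
        (pr μ {ω | X ω = w.2.2.2.2} * pr μ {ω | Y ω = w.1})) := by
    have := sum_pr_comp μ hW (fun w => (w.2.2.2.2, w.1))
      (fun b : 𝒳 × 𝒴 => Real.log (pr μ {ω | X ω = b.1 ∧ Y ω = b.2} /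
        (pr μ {ω | X ω = b.1} * pr μ {ω | Y ω = b.2})))
    rw [← this, Fintype.sum_prod_type]
    simp only [mutInfo, hWdef, Prod.mk.injEq]
  have huniv : pr μ Set.univ = 1 := by simp [pr]
  have totY : ∑ a, pr μ {ω | Y ω = a} = 1 := by
    simpa [huniv] using pr_marg μ hY Set.univ
  have totU : ∑ a, pr μ {ω | U ω = a} = 1 := by
    simpa [huniv] using pr_marg μ hU Set.univ
  have totW : ∑ a, pr μ {ω | W ω = a} = 1 := by
    simpa [huniv] using pr_marg μ hW Set.univ
  have hqsum : ∑ w, q w ≤ 1 := by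
    simp only [Fintype.sum_prod_type, q]
    have hx : ∀ s u, ∑ x, pr μ {ω | X ω = x ∧ S ω = s ∧ U ω = u} / pr μ {ω | S ω = s} ≤
        pr μ {ω | U ω = u} := by
      intro s u
      rw [← Finset.sum_div]
      have h1 := pr_marg μ hX {ω | S ω = s ∧ U ω = u}
      simp only [Set.mem_ofPred_eq] at h1
      have h2 := hUindep u s
      have h3 : {ω | S ω = s ∧ U ω = u} = {ω | U ω = u ∧ S ω = s} := by
        ext ω; exact and_comm
      rw [h1, h3, h2]
      rw [mul_div_assoc]
      exact mul_le_of_le_one_right (hnn _) (div_self_le_one _)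
    have hs : ∀ t, ∑ s, pr μ {ω | S ω = s ∧ Sh ω = t} / pr μ {ω | Sh ω = t} ≤ 1 := by
      intro t
      rw [← Finset.sum_div]
      have h1 := pr_marg μ hS {ω | Sh ω = t}
      simp only [Set.mem_ofPred_eq] at h1
      rw [h1]
      exact div_self_le_one _
    have ht : ∀ y u, ∑ t, pr μ {ω | Sh ω = t ∧ Y ω = y ∧ U ω = u} /
        pr μ {ω | Y ω = y ∧ U ω = u} ≤ 1 := by
      intro y u
      rw [← Finset.sum_div]
      have h1 := pr_marg μ hSh {ω | Y ω = y ∧ U ω = u}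
      simp only [Set.mem_ofPred_eq] at h1
      rw [h1]
      exact div_self_le_one _
    simp only [← Finset.mul_sum, mul_assoc]
    have hd : ∀ E F, 0 ≤ pr μ E / pr μ F := fun E F => div_nonneg (hnn _) (hnn _)
    have hfin : ∑ y, pr μ {ω | Y ω = y} * ∑ u, pr μ {ω | U ω = u} = 1 := by
      rw [totU]; simpa using totY
    rw [← hfin]
    refine Finset.sum_le_sum fun y _ => ?_
    refine mul_le_mul_of_nonneg_left ?_ (hnn _)
    refine Finset.sum_le_sum fun u _ => ?_
    calc _ ≤ ∑ t, pr μ {ω | Sh ω = t ∧ Y ω = y ∧ U ω = u} /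
          pr μ {ω | Y ω = y ∧ U ω = u} * pr μ {ω | U ω = u} := by
          refine Finset.sum_le_sum fun t _ => ?_
          refine mul_le_mul_of_nonneg_left ?_ (hd _ _)
          calc _ ≤ ∑ s, pr μ {ω | S ω = s ∧ Sh ω = t} / pr μ {ω | Sh ω = t} *
                pr μ {ω | U ω = u} :=
                Finset.sum_le_sum fun s _ =>
                  mul_le_mul_of_nonneg_left (hx s u) (hd _ _)
            _ ≤ 1 * pr μ {ω | U ω = u} := by
                rw [← Finset.sum_mul]
                exact mul_le_mul_of_nonneg_right (hs t) (hnn _)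
            _ = _ := one_mul _
      _ ≤ 1 * pr μ {ω | U ω = u} := by
          rw [← Finset.sum_mul]
          exact mul_le_mul_of_nonneg_right (ht y u) (hnn _)
      _ = _ := one_mul _
  have key : ∀ w, pr μ {ω | W ω = w} *
      Real.log (pr μ {ω | S ω = w.2.2.2.1 ∧ Sh ω = w.2.2.1} /
        (pr μ {ω | S ω = w.2.2.2.1} * pr μ {ω | Sh ω = w.2.2.1})) ≤ pr μ {ω | W ω = w} *
      Real.log (pr μ {ω | X ω = w.2.2.2.2 ∧ Y ω = w.1} /
        (pr μ {ω | X ω = w.2.2.2.2} * pr μ {ω | Y ω = w.1})) + (q w - pr μ {ω | W ω = w}) := by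
    intro w
    rcases (hnn {ω | W ω = w}).eq_or_lt with h0 | hpos
    · rw [← h0]; simpa using hq0 w
    obtain ⟨y, u, t, s, x⟩ := w
    have pos : ∀ E : Set Ω, {ω | W ω = (y, u, t, s, x)} ⊆ E → 0 < pr μ E :=
      fun E h => lt_of_lt_of_le hpos (pr_mono' μ h)
    have mem : ∀ ω, ω ∈ {ω | W ω = (y, u, t, s, x)} →
        Y ω = y ∧ U ω = u ∧ Sh ω = t ∧ S ω = s ∧ X ω = x := by
      intro ω h
      simpa [hWdef] using h
    have pX : 0 < pr μ {ω | X ω = x} := pos _ fun ω h => by have := mem ω h; simp [this]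
    have pY : 0 < pr μ {ω | Y ω = y} := pos _ fun ω h => by have := mem ω h; simp [this]
    have pS : 0 < pr μ {ω | S ω = s} := pos _ fun ω h => by have := mem ω h; simp [this]
    have pT : 0 < pr μ {ω | Sh ω = t} := pos _ fun ω h => by have := mem ω h; simp [this]
    have pXY : 0 < pr μ {ω | X ω = x ∧ Y ω = y} :=
      pos _ fun ω h => by have := mem ω h; simp [this]
    have pST : 0 < pr μ {ω | S ω = s ∧ Sh ω = t} :=
      pos _ fun ω h => by have := mem ω h; simp [this]
    have pYU : 0 < pr μ {ω | Y ω = y ∧ U ω = u} :=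
      pos _ fun ω h => by have := mem ω h; simp [this]
    have pTYU : 0 < pr μ {ω | Sh ω = t ∧ Y ω = y ∧ U ω = u} :=
      pos _ fun ω h => by have := mem ω h; simp [this]
    have pXSU : 0 < pr μ {ω | X ω = x ∧ S ω = s ∧ U ω = u} :=
      pos _ fun ω h => by have := mem ω h; simp [this]
    have pM : 0 < pr μ {ω | X ω = x ∧ S ω = s ∧ U ω = u ∧ Y ω = y} :=
      pos _ fun ω h => by have := mem ω h; simp [this]
    have c1 : pr μ {ω | X ω = x ∧ S ω = s ∧ U ω = u ∧ Y ω = y} * pr μ {ω | X ω = x} =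
        pr μ {ω | X ω = x ∧ Y ω = y} * pr μ {ω | X ω = x ∧ S ω = s ∧ U ω = u} := by
      convert condIndep_mul μ hYcond y (s, u) x pX using 3
      all_goals (congr 1; ext ω; (try simp only [Prod.mk.injEq]); tauto)
    have c2 : pr μ {ω | W ω = (y, u, t, s, x)} * pr μ {ω | Y ω = y ∧ U ω = u} =
        pr μ {ω | Sh ω = t ∧ Y ω = y ∧ U ω = u} *
        pr μ {ω | X ω = x ∧ S ω = s ∧ U ω = u ∧ Y ω = y} := by
      have h := condIndep_mul μ hShcond t (s, x) (y, u)
        (by simpa only [Prod.mk.injEq] using pYU)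
      convert h using 3
      all_goals (congr 1; ext ω; simp only [hWdef, Prod.mk.injEq]; try tauto)
    simp only [q]
    generalize pr μ {ω | W ω = (y, u, t, s, x)} = p at *
    generalize pr μ {ω | X ω = x ∧ S ω = s ∧ U ω = u ∧ Y ω = y} = m at *
    generalize pr μ {ω | X ω = x ∧ S ω = s ∧ U ω = u} = xsu at *
    generalize pr μ {ω | Sh ω = t ∧ Y ω = y ∧ U ω = u} = tyu at *
    generalize pr μ {ω | Y ω = y ∧ U ω = u} = yu at *
    generalize pr μ {ω | S ω = s ∧ Sh ω = t} = st at *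
    generalize pr μ {ω | X ω = x ∧ Y ω = y} = xy at *
    generalize pr μ {ω | X ω = x} = a at *
    generalize pr μ {ω | Y ω = y} = b at *
    generalize pr μ {ω | S ω = s} = c at *
    generalize pr μ {ω | Sh ω = t} = d at *
    have hl := Real.log_le_sub_one_of_pos (x := (st / (c * d)) / (xy / (a * b))) (by positivity)
    rw [Real.log_div (by positivity) (by positivity)] at hl
    have hr : b * (tyu / yu) * (st / d) * (xsu / c) = p * ((st / (c * d)) / (xy / (a * b))) := by
      have hp : p = tyu * m / yu := by field_simp; linarith
      have hm : m = xy * xsu / a := by field_simp; linarith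
      rw [hp, hm]
      field_simp
    rw [hr]
    have := mul_le_mul_of_nonneg_left hl hpos.le
    linarith
  rw [e1, e2]
  have := Finset.sum_le_sum fun w (_ : w ∈ Finset.univ) => key w
  rw [Finset.sum_add_distrib, Finset.sum_sub_distrib, totW] at this
  linarith
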